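/- arXiv:2404.18233 — 6 statements merged into one kernel-verified Lean document; each statement's English description precedes it below -/
import Mathlib

section
/- Let T > 0, let m ≥ 1 and n ≥ 1, and let 0 = s_0 < s_1 < ⋯ < s_m = T and 0 = u_0 < u_1 < ⋯ < u_n = T be strictly increasing real sequences sharing the endpoints 0 and T, whose interior points are pairwise distinct (s_i ≠ u_j whenever 0 < i < m and 0 < j < n). Then the number of pairs (i,j) with 1 ≤ i ≤ m, 1 ≤ j ≤ n and Set.Ioc s_{i−1} s_i ∩ Set.Ioc u_{j−1} u_j ≠ ∅ equals 1 + (m−1) + (n−1), i.e., one plus the total number of interior points of the two sequences. -/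
/-- If `s` and `u` increase strictly up to the indices `m` and `n`, two of their half-open
intervals overlap iff each starts before the other one ends. -/
theorem Ioc_inter_Ioc_nonempty_iff_of_strictMonoOn {m n : ℕ} {s u : ℕ → ℝ}
    (hs : StrictMonoOn s (Set.Iic m)) (hu : StrictMonoOn u (Set.Iic n)) {i j : ℕ}
    (hi : i ∈ Finset.Icc 1 m) (hj : j ∈ Finset.Icc 1 n) :
    (Set.Ioc (s (i - 1)) (s i) ∩ Set.Ioc (u (j - 1)) (u j)).Nonempty ↔
      s (i - 1) < u j ∧ u (j - 1) < s i := by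
  rw [Finset.mem_Icc] at hi hj
  have hsi : s (i - 1) < s i :=
    hs (Set.mem_Iic.2 (by omega)) (Set.mem_Iic.2 hi.2) (by omega)
  have huj : u (j - 1) < u j :=
    hu (Set.mem_Iic.2 (by omega)) (Set.mem_Iic.2 hj.2) (by omega)
  rw [Set.Ioc_inter_Ioc, Set.nonempty_Ioc, max_lt_iff, lt_min_iff, lt_min_iff]
  tauto

/-- Two overlapping pairs of intervals on the same antidiagonal are not in strict order. -/
theorem le_of_overlap_of_add_eq {m n : ℕ} {s u : ℕ → ℝ}
    (hs : StrictMonoOn s (Set.Iic m)) (hu : StrictMonoOn u (Set.Iic n)) {i j i' j' : ℕ}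
    (hi' : i' ≤ m) (hj : j ≤ n) (h : u (j - 1) < s i) (h' : s (i' - 1) < u j')
    (hadd : i + j = i' + j') : i' ≤ i := by
  by_contra! hlt
  have h₁ : s i ≤ s (i' - 1) :=
    hs.monotoneOn (Set.mem_Iic.2 (by omega)) (Set.mem_Iic.2 (by omega)) (by omega)
  have h₂ : u j' ≤ u (j - 1) :=
    hu.monotoneOn (Set.mem_Iic.2 (by omega)) (Set.mem_Iic.2 (by omega)) (by omega)
  linarith

/-- Every antidiagonal meets the set of overlapping pairs of intervals. -/
theorem exists_overlap_of_add_eq {m n : ℕ} {s u : ℕ → ℝ} (hm : 1 ≤ m) (hn : 1 ≤ n)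
    (hs : StrictMonoOn s (Set.Iic m)) (hu : StrictMonoOn u (Set.Iic n))
    (h0 : s 0 = u 0) (hmn : s m = u n)
    (hdist : ∀ i j : ℕ, 0 < i → i < m → 0 < j → j < n → s i ≠ u j)
    {k : ℕ} (hk : 2 ≤ k) (hkmn : k ≤ m + n) :
    ∃ i ∈ Finset.Icc 1 m, ∃ j ∈ Finset.Icc 1 n,
      i + j = k ∧ s (i - 1) < u j ∧ u (j - 1) < s i := by
  simp only [Finset.mem_Icc]
  have hs' {a b : ℕ} (hab : a < b) (hb : b ≤ m) : s a < s b :=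
    hs (Set.mem_Iic.2 (by omega)) (Set.mem_Iic.2 hb) hab
  have hu' {a b : ℕ} (hab : a < b) (hb : b ≤ n) : u a < u b :=
    hu (Set.mem_Iic.2 (by omega)) (Set.mem_Iic.2 hb) hab
  induction k, hk using Nat.le_induction with
  | base =>
    refine ⟨1, ⟨le_rfl, hm⟩, 1, ⟨le_rfl, hn⟩, rfl, ?_, ?_⟩
    · simpa [h0] using hu' zero_lt_one hn
    · simpa [← h0] using hs' zero_lt_one hm
  | succ k _ ih =>
    obtain ⟨i, ⟨hi1, him⟩, j, ⟨hj1, hjn⟩, hij, h₁, h₂⟩ := ih (by omega)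
    rcases him.eq_or_lt with rfl | him
    · have hjn : j < n := by omega
      have := hu' hjn le_rfl
      exact ⟨i, ⟨hi1, le_rfl⟩, j + 1, ⟨by omega, hjn⟩, by omega,
        h₁.trans (hu' j.lt_succ_self hjn), by simpa [hmn] using this⟩
    rcases hjn.eq_or_lt with rfl | hjn
    · have := hs' him le_rfl
      exact ⟨i + 1, ⟨by omega, him⟩, j, ⟨hj1, le_rfl⟩, by omega,
        by simpa [← hmn] using this, h₂.trans (hs' i.lt_succ_self him)⟩
    rcases (hdist i j hi1 him hj1 hjn).lt_or_gt with h | h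
    · exact ⟨i + 1, ⟨by omega, him⟩, j, ⟨hj1, hjn.le⟩, by omega,
        by simpa using h, h₂.trans (hs' i.lt_succ_self him)⟩
    · exact ⟨i, ⟨hi1, him.le⟩, j + 1, ⟨by omega, hjn⟩, by omega,
        h₁.trans (hu' j.lt_succ_self hjn), by simpa using h⟩


open Classical in
/-- Two strictly increasing sequences sharing endpoints `0` and `T`, with pairwise
distinct interior points, have exactly `1 + (m-1) + (n-1)` overlapping pairs of
consecutive observation intervals. -/
theorem overlaps_count_shared_endpoints (T : ℝ) (hT : 0 < T) (m n : ℕ)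
    (hm : 1 ≤ m) (hn : 1 ≤ n) (s u : ℕ → ℝ)
    (hs0 : s 0 = 0) (hsm : s m = T) (hu0 : u 0 = 0) (hun : u n = T)
    (hs : ∀ i < m, s i < s (i + 1)) (hu : ∀ j < n, u j < u (j + 1))
    (hdist : ∀ i j : ℕ, 0 < i → i < m → 0 < j → j < n → s i ≠ u j) :
    ((Finset.Icc 1 m ×ˢ Finset.Icc 1 n).filter
        (fun p : ℕ × ℕ =>
          (Set.Ioc (s (p.1 - 1)) (s p.1) ∩ Set.Ioc (u (p.2 - 1)) (u p.2)).Nonempty)).card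
      = 1 + (m - 1) + (n - 1) := by
  have hs' : StrictMonoOn s (Set.Iic m) := strictMonoOn_Iic_of_lt_succ hs
  have hu' : StrictMonoOn u (Set.Iic n) := strictMonoOn_Iic_of_lt_succ hu
  have hmem (p : ℕ × ℕ) (hp : p ∈ Finset.Icc 1 m ×ˢ Finset.Icc 1 n) :=
    Ioc_inter_Ioc_nonempty_iff_of_strictMonoOn hs' hu'
      (Finset.mem_product.1 hp).1 (Finset.mem_product.1 hp).2
  rw [Finset.filter_congr hmem]
  trans (Finset.Icc 2 (m + n)).card
  · refine Finset.card_nbij (fun p => p.1 + p.2) ?_ ?_ ?_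
    · intro p hp
      simp only [Finset.mem_coe, Finset.mem_filter, Finset.mem_product, Finset.mem_Icc] at hp ⊢
      omega
    · rintro ⟨i, j⟩ hp ⟨i', j'⟩ hp' hadd
      simp only [Finset.mem_coe, Finset.mem_filter, Finset.mem_product,
        Finset.mem_Icc] at hp hp' hadd
      have h₁ := le_of_overlap_of_add_eq hs' hu' hp'.1.1.2 hp.1.2.2 hp.2.2 hp'.2.1 hadd
      have h₂ := le_of_overlap_of_add_eq hs' hu' hp.1.1.2 hp'.1.2.2 hp'.2.2 hp.2.1 hadd.symm
      rw [Prod.mk.injEq]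
      omega
    · intro k hk
      rw [Finset.mem_coe, Finset.mem_Icc] at hk
      obtain ⟨i, hi, j, hj, hij, h⟩ := exists_overlap_of_add_eq hm hn hs' hu'
        (hs0.trans hu0.symm) (hsm.trans hun.symm) hdist hk.1 hk.2
      exact ⟨(i, j), Finset.mem_filter.2 ⟨Finset.mem_product.2 ⟨hi, hj⟩, h⟩, hij⟩
  · rw [Nat.card_Icc]
    omega
end

section
/- Under the asynchrony and boundary overlap conditions, the number of overlapping pairs, i.e., the number of pairs (i,j) with 1 ≤ i ≤ M₁, 1 ≤ j ≤ M₂ and Set.Ioc t¹_{i−1} t¹_i ∩ Set.Ioc t²_{j−1} t²_j ≠ ∅, equals (M₁+1) + (M₂+1) − 3 = M₁ + M₂ − 1, that is, three less than the total number of observation times in the two sequences. -/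
/-- If each of the points `a 0, …, a (M - 1)` lies below `b N`, then those that are at least `b 0`
are exactly the ones lying in one of the cells `[b (j - 1), b j)`, and each lies in only one. -/
lemma card_filter_mem_Ico_eq {α : Type*} [LinearOrder α] (a b : ℕ → α) (M N : ℕ)
    (hb : StrictMonoOn b (Set.Iic N)) (h : ∀ i ∈ Finset.Icc 1 M, a (i - 1) < b N) :
    ((Finset.Icc 1 M ×ˢ Finset.Icc 1 N).filter
        (fun p : ℕ × ℕ => b (p.2 - 1) ≤ a (p.1 - 1) ∧ a (p.1 - 1) < b p.2)).card
      = ((Finset.Icc 1 M).filter (fun i => b 0 ≤ a (i - 1))).card := by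
  refine Finset.card_nbij Prod.fst ?_ ?_ ?_
  · rintro ⟨i, j⟩ hp
    simp only [Finset.coe_filter, Finset.mem_product, Finset.mem_Icc, Set.mem_ofPred_eq] at hp ⊢
    exact ⟨hp.1.1, (hb.monotoneOn (Set.mem_Iic.2 (by omega)) (Set.mem_Iic.2 (by omega))
      (Nat.zero_le _)).trans hp.2.1⟩
  · rintro ⟨i, j⟩ hp ⟨i', k⟩ hq (rfl : i = i')
    simp only [Finset.coe_filter, Finset.mem_product, Finset.mem_Icc, Set.mem_ofPred_eq] at hp hq
    have hjk := (hb.lt_iff_lt (Set.mem_Iic.2 (by omega)) (Set.mem_Iic.2 (by omega))).1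
      (hp.2.1.trans_lt hq.2.2)
    have hkj := (hb.lt_iff_lt (Set.mem_Iic.2 (by omega)) (Set.mem_Iic.2 (by omega))).1
      (hq.2.1.trans_lt hp.2.2)
    exact Prod.ext rfl (by dsimp only; omega)
  · intro i hi
    obtain ⟨hi, h0⟩ := Finset.mem_filter.1 (Finset.mem_coe.1 hi)
    have hex : ∃ j, a (i - 1) < b j := ⟨N, h i hi⟩
    have hN : Nat.find hex ≤ N := Nat.find_min' hex (h i hi)
    have hpos : 0 < Nat.find hex := (Nat.find_pos hex).2 h0.not_gt
    refine ⟨(i, Nat.find hex), ?_, rfl⟩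
    simp only [Finset.coe_filter, Finset.mem_product, Set.mem_ofPred_eq]
    exact ⟨⟨hi, Finset.mem_Icc.2 ⟨hpos, hN⟩⟩,
      not_lt.1 (Nat.find_min hex (Nat.sub_lt hpos one_pos)), Nat.find_spec hex⟩

/-- If `c ≤ a 1` and `a` increases, at most the first of `a 0, …, a (M - 1)` fails to be
at least `c`. -/
lemma card_filter_le_eq {α : Type*} [LinearOrder α] (a : ℕ → α) (c : α) {M : ℕ} (hM : 1 ≤ M)
    (ha : StrictMonoOn a (Set.Iic M)) (hc : c ≤ a 1) :
    ((Finset.Icc 1 M).filter (fun i => c ≤ a (i - 1))).card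
      = M - 1 + if c ≤ a 0 then 1 else 0 := by
  have htail : (Finset.Icc 2 M).filter (fun i => c ≤ a (i - 1)) = Finset.Icc 2 M := by
    refine Finset.filter_true_of_mem fun i hi => ?_
    rw [Finset.mem_Icc] at hi
    exact hc.trans (ha.monotoneOn (Set.mem_Iic.2 hM) (Set.mem_Iic.2 (by omega)) (by omega))
  have hIcc : Finset.Icc 1 M = insert 1 (Finset.Icc 2 M) := by
    ext i
    simp only [Finset.mem_insert, Finset.mem_Icc]
    omega
  rw [hIcc, Finset.filter_insert, htail]
  split_ifs <;> simp_all

open Classical in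
/-- Under complete asynchrony and the boundary overlap conditions, the number of
overlapping pairs of observation intervals equals `M₁ + M₂ - 1`, i.e. three less
than the total number `(M₁+1) + (M₂+1)` of observation times. -/
theorem overlaps_count_asynchronous (M₁ M₂ : ℕ) (hM₁ : 1 ≤ M₁) (hM₂ : 1 ≤ M₂)
    (t₁ t₂ : ℕ → ℝ)
    (ht₁ : ∀ i < M₁, t₁ i < t₁ (i + 1)) (ht₂ : ∀ j < M₂, t₂ j < t₂ (j + 1))
    (hasync : ∀ i ≤ M₁, ∀ j ≤ M₂, t₁ i ≠ t₂ j)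
    (hinit : max (t₁ 0) (t₂ 0) < min (t₁ 1) (t₂ 1))
    (hterm : max (t₁ (M₁ - 1)) (t₂ (M₂ - 1)) < min (t₁ M₁) (t₂ M₂)) :
    ((Finset.Icc 1 M₁ ×ˢ Finset.Icc 1 M₂).filter
        (fun p : ℕ × ℕ =>
          (Set.Ioc (t₁ (p.1 - 1)) (t₁ p.1) ∩ Set.Ioc (t₂ (p.2 - 1)) (t₂ p.2)).Nonempty)).card
      = M₁ + M₂ - 1 := by
  have hmono₁ : StrictMonoOn t₁ (Set.Iic M₁) := strictMonoOn_Iic_of_lt_succ ht₁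
  have hmono₂ : StrictMonoOn t₂ (Set.Iic M₂) := strictMonoOn_Iic_of_lt_succ ht₂
  simp only [max_lt_iff, lt_min_iff] at hinit hterm
  have hbelow₁ : ∀ i ∈ Finset.Icc 1 M₁, t₁ (i - 1) < t₂ M₂ := fun i hi => by
    rw [Finset.mem_Icc] at hi
    exact (hmono₁.monotoneOn (Set.mem_Iic.2 (by omega)) (Set.mem_Iic.2 (by omega))
      (by omega)).trans_lt hterm.2.1
  have hbelow₂ : ∀ j ∈ Finset.Icc 1 M₂, t₂ (j - 1) < t₁ M₁ := fun j hj => by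
    rw [Finset.mem_Icc] at hj
    exact (hmono₂.monotoneOn (Set.mem_Iic.2 (by omega)) (Set.mem_Iic.2 (by omega))
      (by omega)).trans_lt hterm.1.2
  have hcount₁ := card_filter_mem_Ico_eq t₁ t₂ M₁ M₂ hmono₂ hbelow₁
  have hcount₂ := card_filter_mem_Ico_eq t₂ t₁ M₂ M₁ hmono₁ hbelow₂
  rw [card_filter_le_eq t₁ _ hM₁ hmono₁ hinit.1.2.le] at hcount₁
  rw [card_filter_le_eq t₂ _ hM₂ hmono₂ hinit.2.1.le, ← Finset.map_swap_product,
    Finset.filter_map, Finset.card_map] at hcount₂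
  have hsplit : (Finset.Icc 1 M₁ ×ˢ Finset.Icc 1 M₂).filter
        (fun p : ℕ × ℕ =>
          (Set.Ioc (t₁ (p.1 - 1)) (t₁ p.1) ∩ Set.Ioc (t₂ (p.2 - 1)) (t₂ p.2)).Nonempty)
      = (Finset.Icc 1 M₁ ×ˢ Finset.Icc 1 M₂).filter
          (fun p : ℕ × ℕ => t₂ (p.2 - 1) ≤ t₁ (p.1 - 1) ∧ t₁ (p.1 - 1) < t₂ p.2) ∪
        (Finset.Icc 1 M₁ ×ˢ Finset.Icc 1 M₂).filter
          (fun p : ℕ × ℕ => t₁ (p.1 - 1) ≤ t₂ (p.2 - 1) ∧ t₂ (p.2 - 1) < t₁ p.1) := by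
    rw [← Finset.filter_or]
    refine Finset.filter_congr ?_
    rintro ⟨i, j⟩ hp
    simp only [Finset.mem_product, Finset.mem_Icc] at hp
    have h₁ : t₁ (i - 1) < t₁ i :=
      hmono₁ (Set.mem_Iic.2 (by omega)) (Set.mem_Iic.2 (by omega)) (by omega)
    have h₂ : t₂ (j - 1) < t₂ j :=
      hmono₂ (Set.mem_Iic.2 (by omega)) (Set.mem_Iic.2 (by omega)) (by omega)
    simp only [Set.Ioc_inter_Ioc, Set.nonempty_Ioc, max_lt_iff, lt_min_iff]
    grind
  have hdisj : Disjoint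
      ((Finset.Icc 1 M₁ ×ˢ Finset.Icc 1 M₂).filter
        (fun p : ℕ × ℕ => t₂ (p.2 - 1) ≤ t₁ (p.1 - 1) ∧ t₁ (p.1 - 1) < t₂ p.2))
      ((Finset.Icc 1 M₁ ×ˢ Finset.Icc 1 M₂).filter
        (fun p : ℕ × ℕ => t₁ (p.1 - 1) ≤ t₂ (p.2 - 1) ∧ t₂ (p.2 - 1) < t₁ p.1)) := by
    refine Finset.disjoint_filter.2 ?_
    rintro ⟨i, j⟩ hp hle hge
    simp only [Finset.mem_product, Finset.mem_Icc] at hp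
    exact hasync (i - 1) (by omega) (j - 1) (by omega) (le_antisymm hge.1 hle.1)
  have hfirst : (if t₂ 0 ≤ t₁ 0 then 1 else 0) + (if t₁ 0 ≤ t₂ 0 then 1 else 0) = 1 := by
    have := hasync 0 (Nat.zero_le _) 0 (Nat.zero_le _)
    grind
  rw [hsplit, Finset.card_union_of_disjoint hdisj]
  simp only [Function.comp_def, Function.Embedding.coeFn_mk, Prod.fst_swap, Prod.snd_swap]
    at hcount₂
  grind
end

section
/- Assume for every j with 1 ≤ j ≤ M₂ that t¹_0 < t²_j and t²_{j−1} < t¹_{M₁}, so that S_j := {i : 1 ≤ i ≤ M₁ and Set.Ioc t¹_{i−1} t¹_i ∩ Set.Ioc t²_{j−1} t²_j ≠ ∅} is nonempty; put l_j := min S_j and u_j := max S_j. Then for all P¹, P² : ℝ → ℝ, HY(P¹,P²) = ∑_{j=1}^{M₂} (P¹(t¹_{u_j}) − P¹(t¹_{l_j − 1}))·(P²(t²_j) − P²(t²_{j−1})); i.e., the inner telescoping sums collapse the Hayashi–Yoshida double sum to a single sum over j. -/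
open Classical in
/-- Indicator `χ(i,j)` of the event that the observation intervals
`(t¹_{i-1}, t¹_i]` and `(t²_{j-1}, t²_j]` overlap. -/
noncomputable def chi (t₁ t₂ : ℕ → ℝ) (i j : ℕ) : ℝ :=
  if (Set.Ioc (t₁ (i - 1)) (t₁ i) ∩ Set.Ioc (t₂ (j - 1)) (t₂ j)).Nonempty then 1 else 0

/-- The Hayashi–Yoshida double sum for price functions `P₁, P₂` and observation
times `t₁ 0 < ⋯ < t₁ M₁` and `t₂ 0 < ⋯ < t₂ M₂`. -/
noncomputable def HY (M₁ M₂ : ℕ) (t₁ t₂ : ℕ → ℝ) (P₁ P₂ : ℝ → ℝ) : ℝ :=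
  ∑ i ∈ Finset.Icc 1 M₁, ∑ j ∈ Finset.Icc 1 M₂,
    (P₁ (t₁ i) - P₁ (t₁ (i - 1))) * (P₂ (t₂ j) - P₂ (t₂ (j - 1))) * chi t₁ t₂ i j

/-- The observation time `t₂ j` is *nonextant* if the Hayashi–Yoshida sum does not
depend on the value of the second price function at `t₂ j`. -/
def Nonextant (M₁ M₂ : ℕ) (t₁ t₂ : ℕ → ℝ) (j : ℕ) : Prop :=
  ∀ P₁ P₂ P₂' : ℝ → ℝ, (∀ x : ℝ, x ≠ t₂ j → P₂' x = P₂ x) →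
    HY M₁ M₂ t₁ t₂ P₁ P₂ = HY M₁ M₂ t₁ t₂ P₁ P₂'

/-- A sum of consecutive increments over `Icc a b` telescopes. -/
theorem sum_Icc_sub_pred (f : ℕ → ℝ) {a b : ℕ} (hab : a ≤ b) :
    ∑ i ∈ Finset.Icc a b, (f i - f (i - 1)) = f b - f (a - 1) := by
  induction b, hab using Nat.le_induction with
  | base => simp
  | succ b hab ih =>
    rw [Finset.sum_Icc_succ_top (by omega), ih, Nat.add_sub_cancel]
    ring

/-- The indices of the intervals of an increasing sequence that meet a fixed interval
form an order-connected set. -/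
theorem Ioc_inter_Ioc_nonempty_of_le_of_le {t : ℕ → ℝ} {M : ℕ}
    (ht : MonotoneOn t (Set.Iic M)) (hlt : ∀ i < M, t i < t (i + 1)) {a b : ℝ} {l i u : ℕ}
    (hl : (Set.Ioc (t (l - 1)) (t l) ∩ Set.Ioc a b).Nonempty)
    (hu : (Set.Ioc (t (u - 1)) (t u) ∩ Set.Ioc a b).Nonempty)
    (hi : 1 ≤ i) (hli : l ≤ i) (hiu : i ≤ u) (huM : u ≤ M) :
    (Set.Ioc (t (i - 1)) (t i) ∩ Set.Ioc a b).Nonempty := by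
  obtain ⟨x, ⟨-, hxl⟩, hax, hxb⟩ := hl
  obtain ⟨y, ⟨huy, -⟩, -, hyb⟩ := hu
  have hlower : t l ≤ t i := ht (Set.mem_Iic.2 (by omega)) (Set.mem_Iic.2 (by omega)) hli
  have hupper : t (i - 1) ≤ t (u - 1) :=
    ht (Set.mem_Iic.2 (by omega)) (Set.mem_Iic.2 (by omega)) (by omega)
  have hstep : t (i - 1) < t i := by
    simpa [Nat.sub_add_cancel hi] using hlt (i - 1) (by omega)
  exact ⟨min (t i) b, ⟨lt_min hstep (by linarith), min_le_left _ _⟩,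
    lt_min (by linarith) (by linarith), min_le_right _ _⟩

/-- If every `S_j` is nonempty, with least element `l j` and greatest element `u j`,
then the Hayashi–Yoshida double sum telescopes to a single sum over `j`. -/
theorem HY_collapse (M₁ M₂ : ℕ) (hM₁ : 1 ≤ M₁) (hM₂ : 1 ≤ M₂) (t₁ t₂ : ℕ → ℝ)
    (ht₁ : ∀ i < M₁, t₁ i < t₁ (i + 1)) (ht₂ : ∀ j < M₂, t₂ j < t₂ (j + 1))
    (hbd : ∀ j, 1 ≤ j → j ≤ M₂ → t₁ 0 < t₂ j ∧ t₂ (j - 1) < t₁ M₁)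
    (l u : ℕ → ℕ)
    (hl : ∀ j, 1 ≤ j → j ≤ M₂ →
      IsLeast {i : ℕ | 1 ≤ i ∧ i ≤ M₁ ∧
        (Set.Ioc (t₁ (i - 1)) (t₁ i) ∩ Set.Ioc (t₂ (j - 1)) (t₂ j)).Nonempty} (l j))
    (hu : ∀ j, 1 ≤ j → j ≤ M₂ →
      IsGreatest {i : ℕ | 1 ≤ i ∧ i ≤ M₁ ∧
        (Set.Ioc (t₁ (i - 1)) (t₁ i) ∩ Set.Ioc (t₂ (j - 1)) (t₂ j)).Nonempty} (u j))
    (P₁ P₂ : ℝ → ℝ) :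
    HY M₁ M₂ t₁ t₂ P₁ P₂ =
      ∑ j ∈ Finset.Icc 1 M₂,
        (P₁ (t₁ (u j)) - P₁ (t₁ (l j - 1))) * (P₂ (t₂ j) - P₂ (t₂ (j - 1))) := by
  have hmono : MonotoneOn t₁ (Set.Iic M₁) :=
    monotoneOn_of_le_add_one Set.ordConnected_Iic
      fun i _ _ hi => (ht₁ i (Set.mem_Iic.1 hi)).le
  unfold HY
  rw [Finset.sum_comm]
  refine Finset.sum_congr rfl fun j hj => ?_
  obtain ⟨hj1, hjM⟩ := Finset.mem_Icc.1 hj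
  obtain ⟨⟨hl1, -, hlne⟩, hlmin⟩ := hl j hj1 hjM
  obtain ⟨hmem, humax⟩ := hu j hj1 hjM
  have ⟨_, huM, hune⟩ := hmem
  have hsub : Finset.Icc (l j) (u j) ⊆ Finset.Icc 1 M₁ := Finset.Icc_subset_Icc hl1 huM
  rw [← sum_Icc_sub_pred (fun i => P₁ (t₁ i)) (hlmin hmem), Finset.sum_mul,
    ← Finset.sum_subset hsub]
  · refine Finset.sum_congr rfl fun i hi => ?_
    obtain ⟨hli, hiu⟩ := Finset.mem_Icc.1 hi
    rw [chi, if_pos (Ioc_inter_Ioc_nonempty_of_le_of_le hmono ht₁ hlne hune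
      (hl1.trans hli) hli hiu huM), mul_one]
  · intro i hi hout
    obtain ⟨hi1, hiM⟩ := Finset.mem_Icc.1 hi
    rw [chi, if_neg fun hne => hout (Finset.mem_Icc.2
      ⟨hlmin ⟨hi1, hiM, hne⟩, humax ⟨hi1, hiM, hne⟩⟩), mul_zero]
end

section
/- For 0 < j < M₂, the point t²_j is nonextant if and only if χ(i,j) = χ(i,j+1) for every i with 1 ≤ i ≤ M₁; i.e., the Hayashi–Yoshida sum is independent of the value P²(t²_j) for all choices of P¹ and P² exactly when every interval of the first sequence intersects I²_j if and only if it intersects I²_{j+1}. -/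
/-- A finite sequence that increases at each step is strictly increasing. -/
lemma lt_of_forall_lt_succ {M : ℕ} {t : ℕ → ℝ} (ht : ∀ k < M, t k < t (k + 1))
    {a b : ℕ} (hab : a < b) (hb : b ≤ M) : t a < t b := by
  induction b, hab using Nat.le_induction with
  | base => exact ht a (by omega)
  | succ n _ ih => exact (ih (by omega)).trans (ht n (by omega))

/-- Distinct indices up to `M` give distinct observation times. -/
lemma ne_of_forall_lt_succ {M : ℕ} {t : ℕ → ℝ} (ht : ∀ k < M, t k < t (k + 1))
    {a b : ℕ} (hab : a ≠ b) (ha : a ≤ M) (hb : b ≤ M) : t a ≠ t b := by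
  rcases lt_or_gt_of_ne hab with h | h
  · exact (lt_of_forall_lt_succ ht h hb).ne
  · exact ne_of_gt (lt_of_forall_lt_succ ht h ha)

/-- Effect on the Hayashi–Yoshida sum of changing `P₂` at the single point `t₂ j`. -/
lemma HY_sub_HY_of_eq_off {M₁ M₂ : ℕ} {t₁ t₂ : ℕ → ℝ}
    (ht₂ : ∀ j < M₂, t₂ j < t₂ (j + 1)) {j : ℕ} (hj1 : 0 < j) (hj2 : j < M₂)
    (P₁ : ℝ → ℝ) {P₂ P₂' : ℝ → ℝ} (hP : ∀ x : ℝ, x ≠ t₂ j → P₂' x = P₂ x) :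
    HY M₁ M₂ t₁ t₂ P₁ P₂' - HY M₁ M₂ t₁ t₂ P₁ P₂ =
      (P₂' (t₂ j) - P₂ (t₂ j)) * ∑ i ∈ Finset.Icc 1 M₁,
        (P₁ (t₁ i) - P₁ (t₁ (i - 1))) * (chi t₁ t₂ i j - chi t₁ t₂ i (j + 1)) := by
  set d := P₂' (t₂ j) - P₂ (t₂ j)
  have hdiff : ∀ k ≤ M₂, P₂' (t₂ k) - P₂ (t₂ k) = if k = j then d else 0 := by
    intro k hk
    split_ifs with h
    · rw [h]
    · rw [hP _ (ne_of_forall_lt_succ ht₂ h hk hj2.le), sub_self]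
  unfold HY
  rw [← Finset.sum_sub_distrib, Finset.mul_sum]
  refine Finset.sum_congr rfl fun i _ => ?_
  set p := P₁ (t₁ i) - P₁ (t₁ (i - 1))
  have hterm : ∀ k ∈ Finset.Icc 1 M₂,
      p * (P₂' (t₂ k) - P₂' (t₂ (k - 1))) * chi t₁ t₂ i k -
        p * (P₂ (t₂ k) - P₂ (t₂ (k - 1))) * chi t₁ t₂ i k =
      (if k = j then p * d * chi t₁ t₂ i k else 0) -
        (if k = j + 1 then p * d * chi t₁ t₂ i k else 0) := by
    intro k hk
    rw [Finset.mem_Icc] at hk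
    have h₀ := hdiff k hk.2
    have h₁ := hdiff (k - 1) (by omega)
    simp only [show k - 1 = j ↔ k = j + 1 by omega] at h₁
    calc _ = p * (P₂' (t₂ k) - P₂ (t₂ k)) * chi t₁ t₂ i k -
          p * (P₂' (t₂ (k - 1)) - P₂ (t₂ (k - 1))) * chi t₁ t₂ i k := by ring
      _ = _ := by rw [h₀, h₁]; simp only [mul_ite, ite_mul, mul_zero, zero_mul]
  rw [← Finset.sum_sub_distrib, Finset.sum_congr rfl hterm, Finset.sum_sub_distrib,
    Finset.sum_ite_eq', Finset.sum_ite_eq', if_pos (Finset.mem_Icc.2 ⟨hj1, hj2.le⟩),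
    if_pos (Finset.mem_Icc.2 ⟨by omega, hj2⟩)]
  ring

/-- The unit step at `t i` has a nonzero increment only over the `i`-th interval. -/
lemma step_increment {M : ℕ} {t : ℕ → ℝ} (ht : ∀ k < M, t k < t (k + 1))
    {i k : ℕ} (hi : i ≤ M) (hk1 : 1 ≤ k) (hk : k ≤ M) :
    (if t i ≤ t k then (1 : ℝ) else 0) - (if t i ≤ t (k - 1) then 1 else 0) =
      if k = i then 1 else 0 := by
  have hle : ∀ m ≤ M, (t i ≤ t m ↔ i ≤ m) := by
    intro m hm
    constructor
    · intro h
      by_contra hlt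
      exact absurd (lt_of_forall_lt_succ ht (not_le.1 hlt) hi) (not_lt.2 h)
    · intro h
      rcases h.eq_or_lt with rfl | h
      · exact le_rfl
      · exact (lt_of_forall_lt_succ ht h hm).le
  simp only [hle k hk, hle (k - 1) (by omega)]
  split_ifs <;> first | omega | norm_num

/-- For `0 < j < M₂`, the point `t₂ j` is nonextant iff `χ(i,j) = χ(i,j+1)` for
every `1 ≤ i ≤ M₁`. -/
theorem nonextant_iff_chi_eq (M₁ M₂ : ℕ) (hM₁ : 1 ≤ M₁) (hM₂ : 1 ≤ M₂)
    (t₁ t₂ : ℕ → ℝ)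
    (ht₁ : ∀ i < M₁, t₁ i < t₁ (i + 1)) (ht₂ : ∀ j < M₂, t₂ j < t₂ (j + 1))
    (j : ℕ) (hj1 : 0 < j) (hj2 : j < M₂) :
    Nonextant M₁ M₂ t₁ t₂ j ↔
      ∀ i : ℕ, 1 ≤ i → i ≤ M₁ → chi t₁ t₂ i j = chi t₁ t₂ i (j + 1) := by
  constructor
  · intro h i hi1 hi2
    have hoff : ∀ x : ℝ, x ≠ t₂ j → (fun y => if y = t₂ j then (1 : ℝ) else 0) x =
        (fun _ => (0 : ℝ)) x := fun x hx => if_neg hx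
    have hchange := HY_sub_HY_of_eq_off (M₁ := M₁) (t₁ := t₁) ht₂ hj1 hj2
      (fun x => if t₁ i ≤ x then (1 : ℝ) else 0) hoff
    rw [← h _ _ _ hoff, sub_self] at hchange
    have hsum : ∀ k ∈ Finset.Icc 1 M₁,
        ((if t₁ i ≤ t₁ k then (1 : ℝ) else 0) - (if t₁ i ≤ t₁ (k - 1) then 1 else 0)) *
          (chi t₁ t₂ k j - chi t₁ t₂ k (j + 1)) =
        if k = i then chi t₁ t₂ k j - chi t₁ t₂ k (j + 1) else 0 := by
      intro k hk
      rw [Finset.mem_Icc] at hk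
      rw [step_increment ht₁ hi2 hk.1 hk.2, ite_mul, one_mul, zero_mul]
    rw [Finset.sum_congr rfl hsum, Finset.sum_ite_eq',
      if_pos (Finset.mem_Icc.2 ⟨hi1, hi2⟩)] at hchange
    simp only [if_true, sub_zero, one_mul] at hchange
    exact sub_eq_zero.1 hchange.symm
  · intro h P₁ P₂ P₂' hP
    have hchange := HY_sub_HY_of_eq_off (M₁ := M₁) (t₁ := t₁) ht₂ hj1 hj2 P₁ hP
    rw [Finset.sum_eq_zero, mul_zero] at hchange
    · exact (sub_eq_zero.1 hchange).symm
    · intro i hi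
      rw [Finset.mem_Icc] at hi
      rw [h i hi.1 hi.2, sub_self, mul_zero]
end

section
/- Assume the sequences are completely asynchronous, i.e., t¹_i ≠ t²_j for all i, j, and satisfy the boundary overlap conditions max(t¹_0, t²_0) < min(t¹_1, t²_1) and max(t¹_{M₁−1}, t²_{M₂−1}) < min(t¹_{M₁}, t²_{M₂}). Then for every j with 1 < j < M₂ − 1, the point t²_j is nonextant if and only if there exists i with 1 ≤ i ≤ M₁ such that Set.Ioc t²_{j−1} t²_j ∪ Set.Ioc t²_j t²_{j+1} ⊆ Set.Ioc t¹_{i−1} t¹_i. -/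
theorem chi_eq_ite (t₁ t₂ : ℕ → ℝ) (i j : ℕ) :
    chi t₁ t₂ i j =
      if max (t₁ (i - 1)) (t₂ (j - 1)) < min (t₁ i) (t₂ j) then 1 else 0 := by
  simp only [chi, Set.Ioc_inter_Ioc, Set.nonempty_Ioc]

theorem strictMonoOn_Iic_of_lt_add_one {t : ℕ → ℝ} {M : ℕ} (ht : ∀ i < M, t i < t (i + 1)) :
    StrictMonoOn t (Set.Iic M) := by
  intro a _ b hb hab
  rw [Set.mem_Iic] at hb
  induction b, hab using Nat.le_induction with
  | base => exact ht a hb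
  | succ n _ ih => exact (ih (by omega)).trans (ht n hb)

/-- Changing `P₂` only at `t₂ j` changes the Hayashi–Yoshida sum through the difference of the
overlap indicators of the two intervals adjacent to `t₂ j`. -/
theorem HY_sub_HY {M₁ M₂ : ℕ} {t₁ t₂ : ℕ → ℝ} (ht₂ : Set.InjOn t₂ (Set.Iic M₂)) {j : ℕ}
    (hj1 : 1 ≤ j) (hj2 : j < M₂) (P₁ : ℝ → ℝ) {P₂ P₂' : ℝ → ℝ}
    (hP : ∀ x, x ≠ t₂ j → P₂' x = P₂ x) :
    HY M₁ M₂ t₁ t₂ P₁ P₂ - HY M₁ M₂ t₁ t₂ P₁ P₂' =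
      (P₂ (t₂ j) - P₂' (t₂ j)) * ∑ i ∈ Finset.Icc 1 M₁,
        (P₁ (t₁ i) - P₁ (t₁ (i - 1))) * (chi t₁ t₂ i j - chi t₁ t₂ i (j + 1)) := by
  have hP' : ∀ k ≤ M₂, k ≠ j → P₂' (t₂ k) = P₂ (t₂ k) := fun k hk hkj =>
    hP _ fun h => hkj (ht₂ hk hj2.le h)
  rw [HY, HY, ← Finset.sum_sub_distrib, Finset.mul_sum]
  refine Finset.sum_congr rfl fun i _ => ?_
  rw [← Finset.sum_sub_distrib]
  set d := (P₂ (t₂ j) - P₂' (t₂ j)) * (P₁ (t₁ i) - P₁ (t₁ (i - 1))) with hd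
  have hsummand : ∀ k ∈ Finset.Icc 1 M₂,
      (P₁ (t₁ i) - P₁ (t₁ (i - 1))) * (P₂ (t₂ k) - P₂ (t₂ (k - 1))) * chi t₁ t₂ i k -
        (P₁ (t₁ i) - P₁ (t₁ (i - 1))) * (P₂' (t₂ k) - P₂' (t₂ (k - 1))) * chi t₁ t₂ i k =
      (if k = j then d * chi t₁ t₂ i j else 0) +
        (if k = j + 1 then -(d * chi t₁ t₂ i (j + 1)) else 0) := by
    intro k hk
    rw [Finset.mem_Icc] at hk
    by_cases hkj : k = j
    · subst hkj
      rw [hP' (k - 1) (by omega) (by omega), if_pos rfl, if_neg (by omega)]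
      ring
    · rw [hP' k hk.2 hkj, if_neg hkj]
      by_cases hkj' : k = j + 1
      · subst hkj'
        rw [if_pos rfl, Nat.add_sub_cancel]
        ring
      · rw [hP' (k - 1) (by omega) (by omega), if_neg hkj']
        ring
  rw [Finset.sum_congr rfl hsummand, Finset.sum_add_distrib, Finset.sum_ite_eq',
    Finset.sum_ite_eq', if_pos (Finset.mem_Icc.2 ⟨hj1, hj2.le⟩),
    if_pos (Finset.mem_Icc.2 ⟨by omega, hj2⟩)]
  ring

theorem nonextant_iff_forall_chi_eq {M₁ M₂ : ℕ} {t₁ t₂ : ℕ → ℝ}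
    (ht₁ : StrictMonoOn t₁ (Set.Iic M₁)) (ht₂ : Set.InjOn t₂ (Set.Iic M₂)) {j : ℕ}
    (hj1 : 1 ≤ j) (hj2 : j < M₂) :
    Nonextant M₁ M₂ t₁ t₂ j ↔
      ∀ i, 1 ≤ i → i ≤ M₁ → chi t₁ t₂ i j = chi t₁ t₂ i (j + 1) := by
  constructor
  · intro h i hi1 hi2
    let P₁ : ℝ → ℝ := fun x => if t₁ i ≤ x then 1 else 0
    let P₂ : ℝ → ℝ := fun x => if x = t₂ j then 1 else 0
    have hP : ∀ x, x ≠ t₂ j → (0 : ℝ → ℝ) x = P₂ x := fun x hx => by simp [P₂, hx]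
    have hdiff := HY_sub_HY (M₁ := M₁) (t₁ := t₁) ht₂ hj1 hj2 P₁ hP
    have hincr : ∀ k, 1 ≤ k → k ≤ M₁ →
        P₁ (t₁ k) - P₁ (t₁ (k - 1)) = if k = i then 1 else 0 := by
      intro k hk1 hk2
      have hle : ∀ m ≤ M₁, t₁ i ≤ t₁ m ↔ i ≤ m := fun m hm => ht₁.le_iff_le hi2 hm
      simp only [P₁, hle k hk2, hle (k - 1) (by omega)]
      split_ifs <;> first | omega | norm_num
    rw [h P₁ P₂ 0 hP, sub_self, Finset.sum_eq_single_of_mem i (Finset.mem_Icc.2 ⟨hi1, hi2⟩),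
      hincr i hi1 hi2] at hdiff
    · simp only [P₂, if_true, Pi.zero_apply] at hdiff
      linarith
    · intro k hk hki
      rw [Finset.mem_Icc] at hk
      rw [hincr k hk.1 hk.2, if_neg hki, zero_mul]
  · intro h P₁ P₂ P₂' hP
    rw [← sub_eq_zero, HY_sub_HY ht₂ hj1 hj2 P₁ hP, Finset.sum_eq_zero, mul_zero]
    intro i hi
    rw [Finset.mem_Icc] at hi
    rw [h i hi.1 hi.2, sub_self, mul_zero]

theorem exists_mem_Ioc_of_mem_Ioc (t : ℕ → ℝ) {M : ℕ} {x : ℝ} (hx : x ∈ Set.Ioc (t 0) (t M)) :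
    ∃ i, 1 ≤ i ∧ i ≤ M ∧ x ∈ Set.Ioc (t (i - 1)) (t i) := by
  have hex : ∃ i, x ≤ t i := ⟨M, hx.2⟩
  have hpos : 1 ≤ Nat.find hex := by
    rw [Nat.one_le_iff_ne_zero]
    intro h0
    have hle := Nat.find_spec hex
    rw [h0] at hle
    exact absurd hx.1 hle.not_gt
  exact ⟨Nat.find hex, hpos, Nat.find_min' hex hx.2,
    not_le.1 (Nat.find_min hex (by omega)), Nat.find_spec hex⟩

/-- Under complete asynchrony and the boundary overlap conditions, for
`1 < j < M₂ - 1` the point `t₂ j` is nonextant iff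
`I²_j ∪ I²_{j+1} ⊆ I¹_i` for some `1 ≤ i ≤ M₁`. -/
theorem nonextant_iff_union_subset (M₁ M₂ : ℕ) (hM₁ : 1 ≤ M₁) (hM₂ : 1 ≤ M₂)
    (t₁ t₂ : ℕ → ℝ)
    (ht₁ : ∀ i < M₁, t₁ i < t₁ (i + 1)) (ht₂ : ∀ j < M₂, t₂ j < t₂ (j + 1))
    (hasync : ∀ i ≤ M₁, ∀ j ≤ M₂, t₁ i ≠ t₂ j)
    (hinit : max (t₁ 0) (t₂ 0) < min (t₁ 1) (t₂ 1))
    (hterm : max (t₁ (M₁ - 1)) (t₂ (M₂ - 1)) < min (t₁ M₁) (t₂ M₂))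
    (j : ℕ) (hj1 : 1 < j) (hj2 : j < M₂ - 1) :
    Nonextant M₁ M₂ t₁ t₂ j ↔
      ∃ i : ℕ, 1 ≤ i ∧ i ≤ M₁ ∧
        Set.Ioc (t₂ (j - 1)) (t₂ j) ∪ Set.Ioc (t₂ j) (t₂ (j + 1)) ⊆
          Set.Ioc (t₁ (i - 1)) (t₁ i) := by
  have hmono₁ := strictMonoOn_Iic_of_lt_add_one ht₁
  have hmono₂ := strictMonoOn_Iic_of_lt_add_one ht₂
  have hle₁ : ∀ a b, a ≤ b → b ≤ M₁ → t₁ a ≤ t₁ b := fun a b hab hb =>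
    hmono₁.monotoneOn (hab.trans hb) hb hab
  have hle₂ : ∀ a b, a ≤ b → b ≤ M₂ → t₂ a ≤ t₂ b := fun a b hab hb =>
    hmono₂.monotoneOn (hab.trans hb) hb hab
  have hprev : t₂ (j - 1) < t₂ j := hmono₂ (by simp; omega) (by simp; omega) (by omega)
  have hnext : t₂ j < t₂ (j + 1) := ht₂ j (by omega)
  rw [nonextant_iff_forall_chi_eq hmono₁ hmono₂.injOn hj1.le (by omega)]
  have hfirst : t₁ 0 < t₂ (j - 1) :=
    (((le_max_left _ _).trans_lt hinit).trans_le (min_le_right _ _)).trans_le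
      (hle₂ 1 (j - 1) (by omega) (by omega))
  have hlast : t₂ (j + 1) < t₁ M₁ :=
    (hle₂ (j + 1) (M₂ - 1) (by omega) (by omega)).trans_lt
      (((le_max_right _ _).trans_lt hterm).trans_le (min_le_left _ _))
  have hchi : ∀ i, chi t₁ t₂ i j = chi t₁ t₂ i (j + 1) ↔
      (max (t₁ (i - 1)) (t₂ (j - 1)) < min (t₁ i) (t₂ j) ↔
        max (t₁ (i - 1)) (t₂ j) < min (t₁ i) (t₂ (j + 1))) := by
    intro i
    rw [chi_eq_ite, chi_eq_ite, Nat.add_sub_cancel]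
    split_ifs with h₁ h₂ h₂ <;>
      simp only [h₁, h₂, one_ne_zero, zero_ne_one, iff_false, not_true, iff_true]
  simp only [hchi, max_lt_iff, lt_min_iff]
  rw [Set.Ioc_union_Ioc_eq_Ioc hprev.le hnext.le]
  simp only [Set.Ioc_subset_Ioc_iff (hprev.trans hnext)]
  constructor
  · intro h
    obtain ⟨i, hi1, hiM, hil, hir⟩ :=
      exists_mem_Ioc_of_mem_Ioc t₁ (M := M₁) ⟨hfirst.trans hprev, (hnext.trans hlast).le⟩
    have hir' : t₂ j < t₁ i := lt_of_le_of_ne hir (hasync i hiM j (by omega)).symm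
    refine ⟨i, hi1, hiM, ?_, ?_⟩
    · by_contra! hlt
      rcases eq_or_lt_of_le hiM with rfl | hi
      · exact hlt.not_gt hlast
      · have hstep := ht₁ i hi
        have hi' := (h (i + 1) (by omega) hi).2
        rw [Nat.add_sub_cancel] at hi'
        have := hi' ⟨⟨hstep, hir'.trans hstep⟩, hlt, hnext⟩
        exact hir'.not_gt this.2.1
    · by_contra! hlt
      rcases eq_or_lt_of_le hi1 with rfl | hi
      · exact hlt.not_gt hfirst
      · have hstep := ht₁ (i - 1 - 1) (by omega)
        rw [Nat.sub_add_cancel (by omega)] at hstep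
        have := (h (i - 1) (by omega) (by omega)).1 ⟨⟨hstep, hlt⟩, hstep.trans hil, hprev⟩
        exact hil.not_gt this.1.2
  · rintro ⟨i, hi1, hiM, hr, hl⟩ k hk1 hkM
    rcases lt_trichotomy k i with hki | rfl | hki
    · have := hle₁ k (i - 1) (by omega) (by omega)
      constructor <;> rintro ⟨⟨_, _⟩, _, _⟩ <;> exfalso <;> linarith
    · have := ht₁ (k - 1) (by omega)
      rw [Nat.sub_add_cancel hk1] at this
      constructor <;> intro _ <;> refine ⟨⟨?_, ?_⟩, ?_, ?_⟩ <;> linarith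
    · have := hle₁ i (k - 1) (by omega) (by omega)
      constructor <;> rintro ⟨⟨_, _⟩, _, _⟩ <;> exfalso <;> linarith
end

section
/- Fix j with 0 < j < M₂ and assume the two sequences share no common value, t¹_0 < t²_{j−1}, and t²_{j+1} ≤ t¹_{M₁}. Then there exists i with 1 ≤ i ≤ M₁ such that Set.Ioc t²_{j−1} t²_j ∪ Set.Ioc t²_j t²_{j+1} ⊆ Set.Ioc t¹_{i−1} t¹_i if and only if there exists exactly one i with 1 ≤ i ≤ M₁ such that (Set.Ioc t²_{j−1} t²_j ∪ Set.Ioc t²_j t²_{j+1}) ∩ Set.Ioc t¹_{i−1} t¹_i ≠ ∅. -/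
/-- The intervals `(t (i - 1), t i]`, `1 ≤ i ≤ M`, cover `(t 0, t M]`. -/
theorem exists_mem_Ioc_pred_of_mem_Ioc {α : Type*} [LinearOrder α] {t : ℕ → α} {M : ℕ} {x : α}
    (hx : x ∈ Set.Ioc (t 0) (t M)) :
    ∃ i, (1 ≤ i ∧ i ≤ M) ∧ x ∈ Set.Ioc (t (i - 1)) (t i) := by
  classical
  have hex : ∃ i, x ≤ t i := ⟨M, hx.2⟩
  have hpos : 0 < Nat.find hex := by
    rw [Nat.find_pos]
    exact not_le.2 hx.1
  exact ⟨Nat.find hex, ⟨hpos, Nat.find_min' hex hx.2⟩,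
    not_le.1 (Nat.find_min hex (Nat.sub_lt hpos one_pos)), Nat.find_spec hex⟩

/-- The intervals `(t (i - 1), t i]`, `1 ≤ i ≤ M`, are pairwise disjoint if `t` is monotone
up to `M`. -/
theorem eq_of_mem_Ioc_pred {α : Type*} [LinearOrder α] {t : ℕ → α} {M : ℕ}
    (ht : MonotoneOn t (Set.Iic M)) {x : α} {i k : ℕ} (hi : i ≤ M) (hk : k ≤ M)
    (hxi : x ∈ Set.Ioc (t (i - 1)) (t i)) (hxk : x ∈ Set.Ioc (t (k - 1)) (t k)) : i = k := by
  have le_of_mem : ∀ {a b : ℕ}, a ≤ M → b ≤ M → x ∈ Set.Ioc (t (a - 1)) (t a) →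
      x ∈ Set.Ioc (t (b - 1)) (t b) → a ≤ b := by
    intro a b ha hb hxa hxb
    by_contra! hba
    have hle : t b ≤ t (a - 1) :=
      ht (Set.mem_Iic.2 hb) (Set.mem_Iic.2 (by omega)) (by omega)
    exact (hxa.1.trans_le (hxb.2.trans hle)).false
  exact le_antisymm (le_of_mem hi hk hxi hxk) (le_of_mem hk hi hxk hxi)

/-- For `0 < j < M₂`, if the two strictly increasing sequences share no common
value, `t¹_0 < t²_{j-1}` and `t²_{j+1} ≤ t¹_{M₁}`, then
`I²_j ∪ I²_{j+1} ⊆ I¹_i` for some `1 ≤ i ≤ M₁` iff there is exactly one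
`1 ≤ i ≤ M₁` with `(I²_j ∪ I²_{j+1}) ∩ I¹_i ≠ ∅`. -/
theorem union_subset_iff_unique_overlap (M₁ M₂ : ℕ) (hM₁ : 1 ≤ M₁) (hM₂ : 1 ≤ M₂)
    (t₁ t₂ : ℕ → ℝ)
    (ht₁ : ∀ i < M₁, t₁ i < t₁ (i + 1)) (ht₂ : ∀ j < M₂, t₂ j < t₂ (j + 1))
    (hasync : ∀ i ≤ M₁, ∀ j ≤ M₂, t₁ i ≠ t₂ j)
    (j : ℕ) (hj1 : 0 < j) (hj2 : j < M₂)
    (h0 : t₁ 0 < t₂ (j - 1)) (hM : t₂ (j + 1) ≤ t₁ M₁) :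
    (∃ i : ℕ, 1 ≤ i ∧ i ≤ M₁ ∧
        Set.Ioc (t₂ (j - 1)) (t₂ j) ∪ Set.Ioc (t₂ j) (t₂ (j + 1)) ⊆
          Set.Ioc (t₁ (i - 1)) (t₁ i)) ↔
    (∃! i : ℕ, (1 ≤ i ∧ i ≤ M₁) ∧
        ((Set.Ioc (t₂ (j - 1)) (t₂ j) ∪ Set.Ioc (t₂ j) (t₂ (j + 1))) ∩
          Set.Ioc (t₁ (i - 1)) (t₁ i)).Nonempty) := by
  have hmono : MonotoneOn t₁ (Set.Iic M₁) :=
    monotoneOn_of_le_succ Set.ordConnected_Iic fun i _ _ hi => (ht₁ i (Nat.lt_of_succ_le hi)).le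
  have hleft : t₂ (j - 1) < t₂ j := by
    simpa [Nat.sub_add_cancel hj1] using ht₂ (j - 1) (by omega)
  have hright : t₂ j < t₂ (j + 1) := ht₂ j hj2
  rw [Set.Ioc_union_Ioc_eq_Ioc hleft.le hright.le]
  constructor
  · rintro ⟨i, hi1, hiM, hsub⟩
    have hmem : t₂ j ∈ Set.Ioc (t₂ (j - 1)) (t₂ (j + 1)) := ⟨hleft, hright.le⟩
    refine ⟨i, ⟨⟨hi1, hiM⟩, t₂ j, hmem, hsub hmem⟩, ?_⟩
    rintro k ⟨⟨-, hkM⟩, x, hx, hxk⟩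
    exact eq_of_mem_Ioc_pred hmono hkM hiM hxk (hsub hx)
  · rintro ⟨i, ⟨⟨hi1, hiM⟩, -⟩, huniq⟩
    refine ⟨i, hi1, hiM, fun x hx => ?_⟩
    obtain ⟨k, hk, hxk⟩ :=
      exists_mem_Ioc_pred_of_mem_Ioc (t := t₁) ⟨h0.trans hx.1, hx.2.trans hM⟩
    exact huniq k ⟨hk, x, hx, hxk⟩ ▸ hxk
end
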